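/- Let 𝔾₁ = (X₁, A₁, λ₁) and 𝔾₂ = (X₂, A₂, λ₂) be synchronous games. Then the product game 𝔾₁ × 𝔾₂ has a perfect C*-strategy if and only if both 𝔾₁ and 𝔾₂ have perfect C*-strategies. -/

import Mathlib

/-- The rule function of the product of two (synchronous) games. -/
def prodRule {X₁ X₂ A₁ A₂ : Type}
    (lam₁ : X₁ → X₁ → A₁ → A₁ → Bool) (lam₂ : X₂ → X₂ → A₂ → A₂ → Bool)
    (x y : X₁ × X₂) (a b : A₁ × A₂) : Bool :=
  lam₁ x.1 y.1 a.1 b.1 && lam₂ x.2 y.2 a.2 b.2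

/-- A synchronous game with rule function `lam` has a perfect C*-strategy if there is a
nonzero unital C*-algebra with self-adjoint idempotents `e x a` summing to `1` over `a`
for each `x`, and `e x a * e y b = 0` whenever `lam x y a b = 0`. -/
def PerfectCStarStrategy {X A : Type} [Fintype A] (lam : X → X → A → A → Bool) : Prop :=
  ∃ (𝒜 : Type) (_ : CStarAlgebra 𝒜) (_ : Nontrivial 𝒜) (e : X → A → 𝒜),
    (∀ x a, star (e x a) = e x a) ∧
    (∀ x a, e x a * e x a = e x a) ∧
    (∀ x, ∑ a, e x a = 1) ∧
    (∀ x y a b, lam x y a b = false → e x a * e y b = 0)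

section Helpers
open scoped ComplexOrder InnerProductSpace TensorProduct
open UniformSpace

/-- A norm-one functional with `g 1 = 1` is real on self-adjoint elements. -/
lemma im_eq_zero_of_selfAdjoint {A : Type} [CStarAlgebra A] [Nontrivial A] (g : StrongDual ℂ A)
    (hg : ‖g‖ = 1) (h1 : g 1 = 1) (a : A) (ha : IsSelfAdjoint a) : (g a).im = 0 := by
  have key : ∀ t : ℝ, ((g a).im + t) ^ 2 ≤ ‖a‖ ^ 2 + t ^ 2 := by
    intro t
    have hle : ‖g (a + (Complex.I * t) • (1 : A))‖ ≤ ‖a + (Complex.I * t) • (1 : A)‖ := by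
      simpa [hg] using g.le_opNorm (a + (Complex.I * t) • (1 : A))
    have him : |(g a).im + t| ≤ ‖g (a + (Complex.I * t) • (1 : A))‖ := by
      have h2 := Complex.abs_im_le_norm (g (a + (Complex.I * t) • (1 : A)))
      rw [map_add, map_smul, h1] at h2 ⊢
      simpa using h2
    have hmul : star (a + (Complex.I * t) • (1 : A)) * (a + (Complex.I * t) • (1 : A))
        = a * a + ((t : ℂ) ^ 2) • (1 : A) := by
      rw [star_add, star_smul, ha.star_eq, star_one]
      simp only [add_mul, mul_add, smul_mul_assoc, mul_smul_comm, one_mul, mul_one]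
      have h3 : (Complex.I * t) * star (Complex.I * t) = (t : ℂ) ^ 2 := by
        simp only [star_mul', Complex.star_def, Complex.conj_I, Complex.conj_ofReal]
        linear_combination (-(t : ℂ) ^ 2) * Complex.I_sq
      have h4 : star (Complex.I * t) = -(Complex.I * t) := by
        simp
      rw [← h3, h4]
      simp only [neg_smul, mul_neg, smul_add, smul_neg, smul_smul]
      abel
    have hsq : ‖a + (Complex.I * t) • (1 : A)‖ ^ 2 ≤ ‖a‖ ^ 2 + t ^ 2 := by
      rw [sq, ← CStarRing.norm_star_mul_self, hmul]
      refine (norm_add_le _ _).trans ?_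
      refine add_le_add ((norm_mul_le _ _).trans (by rw [sq])) ?_
      rw [norm_smul]
      simp
    calc ((g a).im + t) ^ 2 = |(g a).im + t| ^ 2 := (sq_abs _).symm
      _ ≤ ‖a + (Complex.I * t) • (1 : A)‖ ^ 2 :=
        pow_le_pow_left₀ (abs_nonneg _) (him.trans hle) 2
      _ ≤ _ := hsq
  by_contra hne
  have h2 := key ((‖a‖ ^ 2 + 1) / (2 * (g a).im))
  have h3 : 2 * (g a).im * ((‖a‖ ^ 2 + 1) / (2 * (g a).im)) = ‖a‖ ^ 2 + 1 := by
    field_simp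
  nlinarith [sq_nonneg (g a).im]

/-- Every nonzero unital C*-algebra has a state. -/
lemma exists_state (A : Type) [CStarAlgebra A] [PartialOrder A] [StarOrderedRing A]
    [Nontrivial A] : ∃ f : A →ₚ[ℂ] ℂ, f 1 = 1 := by
  obtain ⟨g, hg, h1⟩ := exists_dual_vector ℂ (1 : A) (by simp)
  have h1 : g 1 = 1 := by simpa using h1
  refine ⟨PositiveLinearMap.mk₀ (g : A →ₗ[ℂ] ℂ) ?_, h1⟩
  intro a ha
  have him := im_eq_zero_of_selfAdjoint g hg h1 a ha.isSelfAdjoint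
  have hle : a ≤ algebraMap ℝ A ‖a‖ := IsSelfAdjoint.le_algebraMap_norm_self ha.isSelfAdjoint
  have hn : ‖algebraMap ℝ A ‖a‖ - a‖ ≤ ‖a‖ := by
    have h2 := CStarAlgebra.norm_le_norm_of_nonneg_of_le (sub_nonneg.mpr hle)
      (sub_le_self _ ha)
    simpa using h2
  have hg2 : g (algebraMap ℝ A ‖a‖ - a) = (‖a‖ : ℂ) - g a := by
    have h3 : algebraMap ℝ A ‖a‖ = (‖a‖ : ℂ) • (1 : A) := by
      rw [Algebra.algebraMap_eq_smul_one, Complex.coe_smul]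
    rw [map_sub, h3, map_smul, h1]
    simp
  have h4 : ‖(‖a‖ : ℂ) - g a‖ ≤ ‖a‖ := by
    rw [← hg2]
    refine (g.le_opNorm _).trans ?_
    rw [hg, one_mul]
    exact hn
  have h5 := (Complex.re_le_norm _).trans h4
  rw [Complex.sub_re, Complex.ofReal_re] at h5
  change 0 ≤ g a
  rw [Complex.le_def]
  exact ⟨by simp only [Complex.zero_re]; linarith, by simp [him]⟩

variable {H₁ H₂ : Type} [NormedAddCommGroup H₁] [InnerProductSpace ℂ H₁] [CompleteSpace H₁]
  [NormedAddCommGroup H₂] [InnerProductSpace ℂ H₂] [CompleteSpace H₂]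

/-- The operator `p ⊗ q` on the completed Hilbert space tensor product. -/
noncomputable def tensOp (p : H₁ →L[ℂ] H₁) (q : H₂ →L[ℂ] H₂) :
    Completion (H₁ ⊗[ℂ] H₂) →L[ℂ] Completion (H₁ ⊗[ℂ] H₂) :=
  (TensorProduct.mapL p q).completion

lemma tensOp_coe (p : H₁ →L[ℂ] H₁) (q : H₂ →L[ℂ] H₂) (x : H₁ ⊗[ℂ] H₂) :
    tensOp p q (x : Completion (H₁ ⊗[ℂ] H₂)) = (TensorProduct.mapL p q x : H₁ ⊗[ℂ] H₂) := by
  simp [tensOp]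

lemma op_ext {S T : Completion (H₁ ⊗[ℂ] H₂) →L[ℂ] Completion (H₁ ⊗[ℂ] H₂)}
    (h : ∀ x : H₁ ⊗[ℂ] H₂, S x = T x) : S = T := by
  ext c
  induction c using Completion.induction_on with
  | hp => apply isClosed_eq <;> fun_prop
  | ih c => exact h c

lemma tensOp_mul (p p' : H₁ →L[ℂ] H₁) (q q' : H₂ →L[ℂ] H₂) :
    tensOp p q * tensOp p' q' = tensOp (p * p') (q * q') := by
  apply op_ext
  intro x
  rw [mul_apply_eq_comp, tensOp_coe, tensOp_coe, tensOp_coe, TensorProduct.mapL_mul]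
  rfl

lemma tensOp_one : tensOp (1 : H₁ →L[ℂ] H₁) (1 : H₂ →L[ℂ] H₂) = 1 := by
  apply op_ext
  intro x
  rw [tensOp_coe]
  simp

lemma tensOp_zero_left (q : H₂ →L[ℂ] H₂) : tensOp (0 : H₁ →L[ℂ] H₁) q = 0 := by
  apply op_ext
  intro x
  rw [tensOp_coe]
  simp

lemma tensOp_zero_right (p : H₁ →L[ℂ] H₁) : tensOp p (0 : H₂ →L[ℂ] H₂) = 0 := by
  apply op_ext
  intro x
  rw [tensOp_coe]
  simp

lemma tensOp_add_left (p p' : H₁ →L[ℂ] H₁) (q : H₂ →L[ℂ] H₂) :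
    tensOp (p + p') q = tensOp p q + tensOp p' q := by
  apply op_ext
  intro x
  rw [add_apply, tensOp_coe, tensOp_coe, tensOp_coe,
    TensorProduct.mapL_add_left, add_apply, Completion.coe_add]

lemma tensOp_add_right (p : H₁ →L[ℂ] H₁) (q q' : H₂ →L[ℂ] H₂) :
    tensOp p (q + q') = tensOp p q + tensOp p q' := by
  apply op_ext
  intro x
  rw [add_apply, tensOp_coe, tensOp_coe, tensOp_coe,
    TensorProduct.mapL_add_right, add_apply, Completion.coe_add]

lemma tensOp_sum {A₁ A₂ : Type} [Fintype A₁] [Fintype A₂] (p : A₁ → (H₁ →L[ℂ] H₁))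
    (q : A₂ → (H₂ →L[ℂ] H₂)) :
    ∑ c : A₁ × A₂, tensOp (p c.1) (q c.2) = tensOp (∑ a, p a) (∑ b, q b) := by
  rw [Fintype.sum_prod_type]
  have h1 := map_sum (AddMonoidHom.mk' (fun P : H₁ →L[ℂ] H₁ => tensOp P (∑ b, q b))
    (fun _ _ => tensOp_add_left _ _ _)) p Finset.univ
  simp only [AddMonoidHom.mk'_apply] at h1
  rw [h1]
  refine Finset.sum_congr rfl fun a _ => ?_
  have h2 := map_sum (AddMonoidHom.mk' (fun Q : H₂ →L[ℂ] H₂ => tensOp (p a) Q)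
    (fun _ _ => tensOp_add_right _ _ _)) q Finset.univ
  simp only [AddMonoidHom.mk'_apply] at h2
  rw [h2]

lemma tensOp_star (p : H₁ →L[ℂ] H₁) (q : H₂ →L[ℂ] H₂) :
    star (tensOp p q) = tensOp (star p) (star q) := by
  symm
  refine (ContinuousLinearMap.eq_adjoint_iff _ _).mpr ?_
  intro x y
  induction x, y using Completion.induction_on₂ with
  | hp => apply isClosed_eq <;> fun_prop
  | ih x y =>
    rw [tensOp_coe, tensOp_coe, Completion.inner_coe, Completion.inner_coe]
    induction x using TensorProduct.induction_on with
    | zero => simp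
    | add x x' hx hx' => rw [map_add, inner_add_left, inner_add_left, hx, hx']
    | tmul a b =>
      induction y using TensorProduct.induction_on with
      | zero => simp
      | add y y' hy hy' => rw [map_add, inner_add_right, inner_add_right, hy, hy']
      | tmul c d =>
        simp [ContinuousLinearMap.star_eq_adjoint, ContinuousLinearMap.adjoint_inner_left]

/-- A perfect strategy can be realised on a nonzero Hilbert space. -/
lemma PerfectCStarStrategy.hilbert {X A : Type} [Fintype A] {lam : X → X → A → A → Bool}
    (h : PerfectCStarStrategy lam) :
    ∃ (H : Type) (_ : NormedAddCommGroup H) (_ : InnerProductSpace ℂ H) (_ : CompleteSpace H)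
      (_ : Nontrivial H) (e : X → A → (H →L[ℂ] H)),
    (∀ x a, star (e x a) = e x a) ∧
    (∀ x a, e x a * e x a = e x a) ∧
    (∀ x, ∑ a, e x a = 1) ∧
    (∀ x y a b, lam x y a b = false → e x a * e y b = 0) := by
  obtain ⟨𝒜, _, _, e, h1, h2, h3, h4⟩ := h
  let _ : PartialOrder 𝒜 := CStarAlgebra.spectralOrder 𝒜
  have : StarOrderedRing 𝒜 := CStarAlgebra.spectralOrderedRing 𝒜
  obtain ⟨f, hf⟩ := exists_state 𝒜
  refine ⟨f.GNS, inferInstance, inferInstance, inferInstance, ?_,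
    fun x a => f.gnsStarAlgHom (e x a), ?_, ?_, ?_, ?_⟩
  · refine ⟨⟨((f.toPreGNS 1 : f.PreGNS) : f.GNS), 0, fun h0 => ?_⟩⟩
    have h5 := congrArg norm h0
    rw [Completion.norm_coe, norm_zero, PositiveLinearMap.preGNS_norm_def] at h5
    simp [hf] at h5
  · intro x a
    rw [← map_star, h1]
  · intro x a
    rw [← map_mul, h2]
  · intro x
    rw [← map_sum, h3, map_one]
  · intro x y a b hl
    rw [← map_mul, h4 x y a b hl, map_zero]

/-- Marginals of a perfect strategy, along a fixed embedding of questions. -/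
lemma marginal {X A X' A' B' : Type} [Fintype A] [Fintype A'] [Fintype B']
    {lam : X → X → A → A → Bool} {lam' : X' → X' → A' → A' → Bool}
    (q : X' → X) (r : A' × B' ≃ A)
    (hzero : ∀ x y a b, lam' x y a b = false →
      ∀ c d, lam (q x) (q y) (r (a, c)) (r (b, d)) = false)
    (hsync : ∀ x a c d, c ≠ d → lam (q x) (q x) (r (a, c)) (r (a, d)) = false)
    (h : PerfectCStarStrategy lam) : PerfectCStarStrategy lam' := by
  classical
  obtain ⟨𝒜, i1, i2, e, h1, h2, h3, h4⟩ := h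
  refine ⟨𝒜, i1, i2, fun x a => ∑ c, e (q x) (r (a, c)), ?_, ?_, ?_, ?_⟩
  · intro x a
    simp [star_sum, h1]
  · intro x a
    rw [Finset.sum_mul_sum]
    refine Finset.sum_congr rfl fun c _ => ?_
    rw [Finset.sum_eq_single c, h2]
    · intro d _ hd
      exact h4 _ _ _ _ (hsync x a c d hd.symm)
    · simp
  · intro x
    rw [← h3 (q x), ← Fintype.sum_prod_type', ← r.sum_comp]
  · intro x y a b hl
    rw [Finset.sum_mul_sum]
    exact Finset.sum_eq_zero fun c _ => Finset.sum_eq_zero fun d _ =>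
      h4 _ _ _ _ (hzero x y a b hl c d)

end Helpers

/-- The product of two synchronous games has a perfect C*-strategy if and only if
both factor games do. -/
theorem prod_perfectCStarStrategy_iff
    {X₁ A₁ X₂ A₂ : Type} [Fintype X₁] [Nonempty X₁] [Fintype A₁] [Nonempty A₁]
    [Fintype X₂] [Nonempty X₂] [Fintype A₂] [Nonempty A₂]
    (lam₁ : X₁ → X₁ → A₁ → A₁ → Bool) (lam₂ : X₂ → X₂ → A₂ → A₂ → Bool)
    (hsync₁ : ∀ x a b, a ≠ b → lam₁ x x a b = false)
    (hsync₂ : ∀ x a b, a ≠ b → lam₂ x x a b = false) :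
    PerfectCStarStrategy (prodRule lam₁ lam₂) ↔
      PerfectCStarStrategy lam₁ ∧ PerfectCStarStrategy lam₂ := by
  constructor
  · intro h
    obtain ⟨x₁⟩ := ‹Nonempty X₁›
    obtain ⟨x₂⟩ := ‹Nonempty X₂›
    refine ⟨marginal (fun x => (x, x₂)) (Equiv.refl _) ?_ ?_ h,
      marginal (fun x => (x₁, x)) (Equiv.prodComm _ _) ?_ ?_ h⟩
    · intro x y a b hl c d
      simp [prodRule, hl]
    · intro x a c d hcd
      simp [prodRule, hsync₂ _ _ _ hcd]
    · intro x y a b hl c d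
      simp [prodRule, hl]
    · intro x a c d hcd
      simp [prodRule, hsync₁ _ _ _ hcd]
  · rintro ⟨h, h'⟩
    obtain ⟨H₁, _, _, _, _, e, h1, h2, h3, h4⟩ := h.hilbert
    obtain ⟨H₂, _, _, _, _, e', h1', h2', h3', h4'⟩ := h'.hilbert
    have hnt : Nontrivial (UniformSpace.Completion (TensorProduct ℂ H₁ H₂)) := by
      obtain ⟨v, hv⟩ := exists_ne (0 : H₁)
      obtain ⟨w, hw⟩ := exists_ne (0 : H₂)
      refine ⟨⟨((TensorProduct.tmul ℂ v w : TensorProduct ℂ H₁ H₂) :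
        UniformSpace.Completion (TensorProduct ℂ H₁ H₂)), 0, fun h0 => ?_⟩⟩
      have h5 := congrArg norm h0
      rw [UniformSpace.Completion.norm_coe, norm_zero, TensorProduct.norm_tmul] at h5
      simp [hv, hw] at h5
    refine ⟨UniformSpace.Completion (TensorProduct ℂ H₁ H₂) →L[ℂ]
      UniformSpace.Completion (TensorProduct ℂ H₁ H₂), { }, inferInstance,
      fun x a => tensOp (e x.1 a.1) (e' x.2 a.2), ?_, ?_, ?_, ?_⟩
    · intro x a
      rw [tensOp_star, h1, h1']
    · intro x a
      rw [tensOp_mul, h2, h2']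
    · intro x
      rw [tensOp_sum, h3, h3', tensOp_one]
    · intro x y a b hl
      rw [tensOp_mul]
      simp only [prodRule, Bool.and_eq_false_iff] at hl
      rcases hl with hl | hl
      · rw [h4 _ _ _ _ hl, tensOp_zero_left]
      · rw [h4' _ _ _ _ hl, tensOp_zero_right]
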